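/- For every r ≥ 0 the following statements hold: (i) if (π_r,f_r) is not a fixed point of the operator T, then j_r < j_{r+1}; (ii) if j_r is finite then b_r(j_r) = j_r; (iii) if j_r is finite then f_{r+1}(k⁺) = green for all k with j_r ≤ k ≤ μ−1. -/

import Mathlib

/-!
Call an interval `[c, d]` a block of a coloring when `c⁻` and `d⁺` are green and every position
strictly inside is red; the blocks partition `[1, μ]`, and `a(k)`, `b(k)` are the endpoints of the
block of `k`.  One step of `T` merges all blocks between that of `i` and that of `j` into one.

Part (iii) for the earlier steps says that everything to the right of the last value `J` of `j` is
green, so (ii) follows as soon as the next `j` exceeds `J`.  Hence the induction carries the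
invariant `Inv`: to the right of `J` all positions are green, no `j ≤ J` is a candidate, `π` is
injective, and the endpoints of every nontrivial block carry eligible values.  The last property
persists because the block `[a, j]` created by a step has `π j` at its left end and `π i` at its
right end.

The key point of `Inv.step` is that `j' ≤ j` is not a candidate after the step.  The coloring
excludes `a < j' ≤ j`, and `j' < a` would already have been a candidate.  If `j' = a`, its witness
`i' < a` satisfies `E (π i') (π j)`, whence `π i'` lies in the clique of `π i`, which is the clique
of `π a` since `[a, i]` is a block; injectivity of `π` gives `E (π i') (π a)`, so `a < j` was a
candidate before the step, against the minimality of `j`.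
-/


attribute [local instance] Classical.propDecidable

inductive Col where
  | green : Col
  | red : Col
deriving DecidableEq

namespace TOp

/-- The color of position `k⁺`; positions outside `{lo⁺, …, (hi−1)⁺}` count as green. -/
def fpos (lo hi : ℕ) (f : ℕ → Col) (k : ℕ) : Col :=
  if lo ≤ k ∧ k + 1 ≤ hi then f k else Col.green

/-- `j` is a candidate value for `j_{(π,f)}` : there is `i < j` with
`f(i⁺) = f(j⁻) = green` and `{i,j} ∈ π⁻¹(𝓔)`. -/
def jSpec (lo hi : ℕ) (E : ℕ → ℕ → Prop) (π : ℕ → ℕ) (f : ℕ → Col) (j : ℕ) : Prop :=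
  lo ≤ j ∧ j ≤ hi ∧ ∃ i, lo ≤ i ∧ i < j ∧
    fpos lo hi f i = Col.green ∧ fpos lo hi f (j - 1) = Col.green ∧ E (π i) (π j)

/-- `(π,f)` is not a fixed point of `T`, i.e. `j_{(π,f)} < +∞`. -/
def hasJ (lo hi : ℕ) (E : ℕ → ℕ → Prop) (π : ℕ → ℕ) (f : ℕ → Col) : Prop :=
  ∃ j, jSpec lo hi E π f j

/-- `j_{(π,f)}` (junk value if no candidate exists). -/
noncomputable def jVal (lo hi : ℕ) (E : ℕ → ℕ → Prop) (π : ℕ → ℕ) (f : ℕ → Col) : ℕ :=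
  sInf {j | jSpec lo hi E π f j}

/-- `i_{(π,f)}`. -/
noncomputable def iVal (lo hi : ℕ) (E : ℕ → ℕ → Prop) (π : ℕ → ℕ) (f : ℕ → Col) : ℕ :=
  sSup {i | lo ≤ i ∧ i < jVal lo hi E π f ∧ fpos lo hi f i = Col.green ∧
    E (π i) (π (jVal lo hi E π f))}

/-- `a_{(π,f)}(k)`. -/
noncomputable def aVal (lo hi : ℕ) (f : ℕ → Col) (k : ℕ) : ℕ :=
  if fpos lo hi f (k - 1) = Col.green then k
  else sInf {i' | i' ≤ k ∧ ∀ i'', i' ≤ i'' → i'' < k → fpos lo hi f i'' = Col.red}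

/-- `b_{(π,f)}(k)`. -/
noncomputable def bVal (lo hi : ℕ) (f : ℕ → Col) (k : ℕ) : ℕ :=
  if fpos lo hi f k = Col.green then k
  else sSup {j' | k ≤ j' ∧ ∀ j'', k < j'' → j'' ≤ j' → fpos lo hi f (j'' - 1) = Col.red}

/-- The operator `T` on states `(π, f)`. -/
noncomputable def Tstep (lo hi : ℕ) (E : ℕ → ℕ → Prop)
    (s : (ℕ → ℕ) × (ℕ → Col)) : (ℕ → ℕ) × (ℕ → Col) :=
  if hasJ lo hi E s.1 s.2 then
    let a := aVal lo hi s.2 (iVal lo hi E s.1 s.2)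
    let b := bVal lo hi s.2 (jVal lo hi E s.1 s.2)
    (fun k => if a ≤ k ∧ k ≤ b then
        s.1 (aVal lo hi s.2 (a + b - k) + bVal lo hi s.2 (a + b - k) - (a + b - k))
      else s.1 k,
     fun k => if a ≤ k ∧ k < b then Col.red else s.2 k)
  else s

/-- `(π_r, f_r) = T^r(π₀, 𝐠𝐫𝐞𝐞𝐧)`. -/
noncomputable def TIter (lo hi : ℕ) (E : ℕ → ℕ → Prop) (π₀ : ℕ → ℕ) (r : ℕ) :
    (ℕ → ℕ) × (ℕ → Col) :=
  (Tstep lo hi E)^[r] (π₀, fun _ => Col.green)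

/-- `j_{(π,f)}` as an extended natural number (`⊤` encodes `+∞`). -/
noncomputable def jE (lo hi : ℕ) (E : ℕ → ℕ → Prop) (π : ℕ → ℕ) (f : ℕ → Col) : ℕ∞ :=
  if hasJ lo hi E π f then (jVal lo hi E π f : ℕ∞) else ⊤

end TOp

namespace TOp

/-! ### Blocks of a coloring -/

/-- `[c, d]` is a block of `f`: bounded by green positions, with only red positions inside. -/
def IsBlk (μ : ℕ) (f : ℕ → Col) (c d : ℕ) : Prop :=
  c ≤ d ∧ fpos 1 μ f (c - 1) = Col.green ∧ fpos 1 μ f d = Col.green ∧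
    ∀ m, c ≤ m → m < d → fpos 1 μ f m = Col.red

lemma not_green_of_red {c : Col} (h : c = Col.red) : c ≠ Col.green := by
  subst h; decide

lemma red_of_not_green {c : Col} (h : c ≠ Col.green) : c = Col.red := by
  cases c
  · exact absurd rfl h
  · rfl

lemma range_of_red {μ : ℕ} {f : ℕ → Col} {k : ℕ} (h : fpos 1 μ f k = Col.red) :
    1 ≤ k ∧ k + 1 ≤ μ := by
  by_contra hk
  rw [fpos, if_neg hk] at h
  cases h

lemma IsBlk.aVal_eq {μ : ℕ} {f : ℕ → Col} {c d k : ℕ} (h : IsBlk μ f c d) (h1 : c ≤ k)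
    (h2 : k ≤ d) : aVal 1 μ f k = c := by
  obtain ⟨_, hg, _, hr⟩ := h
  unfold aVal
  split_ifs with hk
  · by_contra hne
    exact not_green_of_red (hr (k - 1) (by omega) (by omega)) hk
  · apply le_antisymm
    · exact Nat.sInf_le ⟨h1, fun m hm hm' => hr m hm (by omega)⟩
    · refine le_csInf ⟨c, h1, fun m hm hm' => hr m hm (by omega)⟩ ?_
      rintro x ⟨hx, hx'⟩
      by_contra hlt
      exact not_green_of_red (hx' (c - 1) (by omega) (by omega)) hg

lemma IsBlk.bVal_eq {μ : ℕ} {f : ℕ → Col} {c d k : ℕ} (h : IsBlk μ f c d) (h1 : c ≤ k)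
    (h2 : k ≤ d) : bVal 1 μ f k = d := by
  obtain ⟨_, _, hg, hr⟩ := h
  unfold bVal
  split_ifs with hk
  · by_contra hne
    exact not_green_of_red (hr k (by omega) (by omega)) hk
  · have hmem : d ∈ {j' | k ≤ j' ∧ ∀ j'', k < j'' → j'' ≤ j' →
        fpos 1 μ f (j'' - 1) = Col.red} :=
      ⟨h2, fun m hm hm' => hr (m - 1) (by omega) (by omega)⟩
    have hub : ∀ x ∈ {j' | k ≤ j' ∧ ∀ j'', k < j'' → j'' ≤ j' →
        fpos 1 μ f (j'' - 1) = Col.red}, x ≤ d := by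
      rintro x ⟨hx, hx'⟩
      by_contra hlt
      have := hx' (d + 1) (by omega) (by omega)
      exact not_green_of_red this hg
    exact le_antisymm (csSup_le ⟨d, hmem⟩ hub) (le_csSup ⟨d, hub⟩ hmem)

/-- Walking left from `k` one reaches a green position. -/
lemma exists_left (μ : ℕ) (f : ℕ → Col) (k : ℕ) (hk : 1 ≤ k) :
    ∃ c, 1 ≤ c ∧ c ≤ k ∧ fpos 1 μ f (c - 1) = Col.green ∧
      ∀ m, c ≤ m → m < k → fpos 1 μ f m = Col.red := by
  induction k, hk using Nat.le_induction with
  | base => exact ⟨1, le_rfl, le_rfl, by simp [fpos], fun m h h' => by omega⟩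
  | succ k hk ih =>
    by_cases hg : fpos 1 μ f k = Col.green
    · exact ⟨k + 1, by omega, le_rfl, hg, fun m h h' => by omega⟩
    · obtain ⟨c, h1, h2, h3, h4⟩ := ih
      refine ⟨c, h1, by omega, h3, fun m hm hm' => ?_⟩
      rcases Nat.lt_succ_iff_lt_or_eq.mp hm' with h | h
      · exact h4 m hm h
      · rw [h]; exact red_of_not_green hg

/-- Walking right from `k` one reaches a green position. -/
lemma exists_right (μ : ℕ) (f : ℕ → Col) (k : ℕ) (hk : k ≤ μ) :
    ∃ d, k ≤ d ∧ d ≤ μ ∧ fpos 1 μ f d = Col.green ∧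
      ∀ m, k ≤ m → m < d → fpos 1 μ f m = Col.red := by
  have hex : ∃ d, k ≤ d ∧ fpos 1 μ f d = Col.green := ⟨μ, hk, by simp [fpos]⟩
  refine ⟨Nat.find hex, (Nat.find_spec hex).1, Nat.find_min' hex ⟨hk, by simp [fpos]⟩,
    (Nat.find_spec hex).2, fun m hm hm' => red_of_not_green fun hg => ?_⟩
  exact Nat.find_min hex hm' ⟨hm, hg⟩

lemma exists_blk (μ : ℕ) (f : ℕ → Col) (k : ℕ) (h1 : 1 ≤ k) (h2 : k ≤ μ) :
    ∃ c d, 1 ≤ c ∧ c ≤ k ∧ k ≤ d ∧ d ≤ μ ∧ IsBlk μ f c d := by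
  obtain ⟨c, hc1, hc2, hc3, hc4⟩ := exists_left μ f k h1
  obtain ⟨d, hd1, hd2, hd3, hd4⟩ := exists_right μ f k h2
  refine ⟨c, d, hc1, hc2, hd1, hd2, by omega, hc3, hd3, fun m hm hm' => ?_⟩
  rcases lt_or_ge m k with h | h
  · exact hc4 m hm h
  · exact hd4 m h hm'

/-- An interval whose two outer positions are green is a union of blocks. -/
lemma IsBlk.within {μ : ℕ} {f : ℕ → Col} {a b c d k : ℕ} (h : IsBlk μ f c d)
    (ha : fpos 1 μ f (a - 1) = Col.green) (hb : fpos 1 μ f b = Col.green)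
    (hck : c ≤ k) (hkd : k ≤ d) (hak : a ≤ k) (hkb : k ≤ b) : a ≤ c ∧ d ≤ b := by
  constructor
  · by_contra hlt
    exact not_green_of_red (h.2.2.2 (a - 1) (by omega) (by omega)) ha
  · by_contra hlt
    exact not_green_of_red (h.2.2.2 b (by omega) (by omega)) hb

/-! ### Reversal of blocks -/

/-- The reversal `k ↦ ←k` of each block. -/
noncomputable def blkRefl (μ : ℕ) (f : ℕ → Col) (k : ℕ) : ℕ :=
  aVal 1 μ f k + bVal 1 μ f k - k

lemma blkRefl_mem {μ : ℕ} {f : ℕ → Col} {a b k : ℕ} (h1 : 1 ≤ a) (h2 : b ≤ μ)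
    (ha : fpos 1 μ f (a - 1) = Col.green) (hb : fpos 1 μ f b = Col.green)
    (hak : a ≤ k) (hkb : k ≤ b) : a ≤ blkRefl μ f k ∧ blkRefl μ f k ≤ b := by
  obtain ⟨c, d, _, hck, hkd, _, hB⟩ := exists_blk μ f k (by omega) (by omega)
  have := hB.within ha hb hck hkd hak hkb
  rw [blkRefl, hB.aVal_eq hck hkd, hB.bVal_eq hck hkd]
  omega

lemma blkRefl_inj {μ : ℕ} {f : ℕ → Col} {k l : ℕ} (hk1 : 1 ≤ k) (hk2 : k ≤ μ)
    (hl1 : 1 ≤ l) (hl2 : l ≤ μ) (h : blkRefl μ f k = blkRefl μ f l) : k = l := by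
  obtain ⟨c, d, _, hck, hkd, _, hB⟩ := exists_blk μ f k hk1 hk2
  obtain ⟨c', d', _, hck', hkd', _, hB'⟩ := exists_blk μ f l hl1 hl2
  rw [blkRefl, blkRefl, hB.aVal_eq hck hkd, hB.bVal_eq hck hkd,
    hB'.aVal_eq hck' hkd', hB'.bVal_eq hck' hkd'] at h
  -- the common image lies in both blocks, which therefore coincide
  have e1 := hB.aVal_eq (k := c + d - k) (by omega) (by omega)
  have e2 := hB.bVal_eq (k := c + d - k) (by omega) (by omega)
  have e1' := hB'.aVal_eq (k := c + d - k) (by omega) (by omega)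
  have e2' := hB'.bVal_eq (k := c + d - k) (by omega) (by omega)
  omega

/-! ### The invariant -/

/-- The induction invariant, with `J` the last value taken by `j` (or `0` initially):
everything to the right of `J` is green, no `j ≤ J` is a candidate, `π` is injective, and the
endpoints of nontrivial blocks carry eligible pairs. -/
structure Inv (μ : ℕ) (E : ℕ → ℕ → Prop) (s : (ℕ → ℕ) × (ℕ → Col)) (J : ℕ) : Prop where
  green : ∀ k, J ≤ k → fpos 1 μ s.2 k = Col.green
  noCand : ∀ j, j ≤ J → ¬ jSpec 1 μ E s.1 s.2 j
  inj : Set.InjOn s.1 (Set.Icc 1 μ)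
  blk : ∀ c d, c < d → IsBlk μ s.2 c d → E (s.1 c) (s.1 d)

lemma jVal_spec {μ : ℕ} {E : ℕ → ℕ → Prop} {π : ℕ → ℕ} {f : ℕ → Col}
    (h : hasJ 1 μ E π f) : jSpec 1 μ E π f (jVal 1 μ E π f) :=
  Nat.sInf_mem h

lemma iVal_spec {μ : ℕ} {E : ℕ → ℕ → Prop} {π : ℕ → ℕ} {f : ℕ → Col}
    (h : hasJ 1 μ E π f) :
    1 ≤ iVal 1 μ E π f ∧ iVal 1 μ E π f < jVal 1 μ E π f ∧
      fpos 1 μ f (iVal 1 μ E π f) = Col.green ∧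
      E (π (iVal 1 μ E π f)) (π (jVal 1 μ E π f)) := by
  obtain ⟨_, _, i, h1, h2, h3, _, h4⟩ := jVal_spec h
  exact Nat.sSup_mem (s := {i | 1 ≤ i ∧ i < jVal 1 μ E π f ∧ fpos 1 μ f i = Col.green ∧
    E (π i) (π (jVal 1 μ E π f))}) ⟨i, h1, h2, h3, h4⟩
    ⟨jVal 1 μ E π f, fun x hx => hx.2.1.le⟩

/-- The next `j` exceeds `J`, so `j⁺` is green and the block of `j` ends at `j`. -/
lemma Inv.data {μ : ℕ} {E : ℕ → ℕ → Prop} {s : (ℕ → ℕ) × (ℕ → Col)} {J : ℕ}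
    (hI : Inv μ E s J) (h : hasJ 1 μ E s.1 s.2) :
    J < jVal 1 μ E s.1 s.2 ∧
      bVal 1 μ s.2 (jVal 1 μ E s.1 s.2) = jVal 1 μ E s.1 s.2 := by
  have hJ : J < jVal 1 μ E s.1 s.2 := by
    by_contra hle
    exact hI.noCand _ (by omega) (jVal_spec h)
  refine ⟨hJ, ?_⟩
  rw [bVal, if_pos (hI.green _ hJ.le)]

/-- A step of `T` preserves the invariant, the new bound being the `j` of that step. -/
lemma Inv.step {μ : ℕ} {E : ℕ → ℕ → Prop} (hEsymm : ∀ x y, E x y → E y x)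
    (hEclique : ∀ x y z, E x y → E y z → x ≠ z → E x z)
    {s : (ℕ → ℕ) × (ℕ → Col)} {J : ℕ}
    (hI : Inv μ E s J) (h : hasJ 1 μ E s.1 s.2) :
    Inv μ E (Tstep 1 μ E s) (jVal 1 μ E s.1 s.2) := by
  obtain ⟨hJj, hb⟩ := hI.data h
  obtain ⟨hi1, hij, hig, hiE⟩ := iVal_spec h
  obtain ⟨hj1, hjμ, _, _, _, _, hjg, _⟩ := jVal_spec h
  have hmin : ∀ j', j' < jVal 1 μ E s.1 s.2 → ¬ jSpec 1 μ E s.1 s.2 j' :=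
    fun j' hj' hc => absurd (Nat.sInf_le hc) (not_le.mpr hj')
  have hT : Tstep 1 μ E s = _ := if_pos h
  rw [hT]
  clear hT
  dsimp only
  rw [hb]
  generalize jVal 1 μ E s.1 s.2 = j at *
  generalize iVal 1 μ E s.1 s.2 = i at *
  obtain ⟨π, f⟩ := s
  dsimp only at *
  have hjG : ∀ k, j ≤ k → fpos 1 μ f k = Col.green := fun k hk => hI.green k (by omega)
  obtain ⟨a, i', ha1, hai, hii', _, hB⟩ := exists_blk μ f i hi1 (by omega)
  -- `i⁺` is green, so `i` is the right end of its block
  have hi' : i' = i := by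
    by_contra hne
    exact not_green_of_red (hB.2.2.2 i hai (by omega)) hig
  subst hi'
  rw [hB.aVal_eq hai le_rfl]
  set f' : ℕ → Col := fun k => if a ≤ k ∧ k < j then Col.red else f k with hf'
  set π' : ℕ → ℕ := fun k => if a ≤ k ∧ k ≤ j then
    π (aVal 1 μ f (a + j - k) + bVal 1 μ f (a + j - k) - (a + j - k)) else π k with hπ'
  have hag := hB.2.1
  have hred : ∀ k, a ≤ k → k < j → fpos 1 μ f' k = Col.red := by
    intro k h1 h2
    rw [fpos, if_pos (by omega), hf']
    exact if_pos ⟨h1, h2⟩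
  have hsame : ∀ k, ¬ (a ≤ k ∧ k < j) → fpos 1 μ f' k = fpos 1 μ f k := by
    intro k hk
    simp only [fpos, hf', if_neg hk]
  have hBj : IsBlk μ f j j := ⟨le_rfl, hjg, hjG j le_rfl, fun m h1 h2 => by omega⟩
  have hπa : π' a = π j := by
    simp only [hπ']
    rw [if_pos (by omega), Nat.add_sub_cancel_left, hBj.aVal_eq le_rfl le_rfl,
      hBj.bVal_eq le_rfl le_rfl, Nat.add_sub_cancel]
  have hπj : π' j = π i' := by
    simp only [hπ']
    rw [if_pos (by omega), Nat.add_sub_cancel, hB.aVal_eq le_rfl hai,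
      hB.bVal_eq le_rfl hai, Nat.add_sub_cancel_left]
  have hπo : ∀ k, k < a → π' k = π k := by
    intro k hk
    simp only [hπ']
    rw [if_neg (by omega)]
  refine ⟨?_, ?_, ?_, ?_⟩
  · intro k hk
    rw [hsame k (by omega)]
    exact hjG k hk
  · rintro k hkj ⟨hk1, hk2, l, hl1, hlk, hlg, hkg, hE⟩
    dsimp only at hlg hkg hE
    have hka : k ≤ a := by
      by_contra hlt
      exact not_green_of_red (hred (k - 1) (by omega) (by omega)) hkg
    rw [hsame _ (by omega)] at hlg hkg
    rw [hπo l (by omega)] at hE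
    rcases hka.lt_or_eq with hka | rfl
    · rw [hπo k hka] at hE
      exact hmin k (by omega) ⟨hk1, hk2, l, hl1, hlk, hlg, hkg, hE⟩
    · rw [hπa] at hE
      have hne : ∀ m, l < m → m ≤ μ → π l ≠ π m := fun m h1 h2 he => by
        have := hI.inj (show l ∈ Set.Icc 1 μ from ⟨by omega, by omega⟩)
          (show m ∈ Set.Icc 1 μ from ⟨by omega, by omega⟩) he
        omega
      have hli : E (π l) (π i') :=
        hEclique _ _ _ hE (hEsymm _ _ hiE) (hne _ (by omega) (by omega))
      have hlk' : E (π l) (π k) := by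
        rcases hai.lt_or_eq with hlt | rfl
        · exact hEclique _ _ _ hli (hEsymm _ _ (hI.blk _ _ hlt hB)) (hne _ hlk hk2)
        · exact hli
      exact hmin k (by omega) ⟨hk1, hk2, l, hl1, hlk, hlg, hkg, hlk'⟩
  · have hin : ∀ k, a ≤ k → k ≤ j → π' k = π (blkRefl μ f (a + j - k)) := by
      intro k h1 h2
      simp only [hπ', blkRefl]
      rw [if_pos ⟨h1, h2⟩]
    have hout : ∀ k, ¬ (a ≤ k ∧ k ≤ j) → π' k = π k := by
      intro k hk
      simp only [hπ']
      rw [if_neg hk]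
    have hmem : ∀ k, a ≤ k → k ≤ j →
        a ≤ blkRefl μ f (a + j - k) ∧ blkRefl μ f (a + j - k) ≤ j := fun k h1 h2 =>
      blkRefl_mem ha1 hjμ hag (hjG j le_rfl) (by omega) (by omega)
    rintro k ⟨hk1, hk2⟩ l ⟨hl1, hl2⟩ hkl
    dsimp only at hkl
    by_cases hk : a ≤ k ∧ k ≤ j <;> by_cases hl : a ≤ l ∧ l ≤ j
    · have h1 := hmem k hk.1 hk.2
      have h2 := hmem l hl.1 hl.2
      rw [hin k hk.1 hk.2, hin l hl.1 hl.2] at hkl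
      have := blkRefl_inj (by omega) (by omega) (by omega) (by omega)
        (hI.inj ⟨by omega, by omega⟩ ⟨by omega, by omega⟩ hkl)
      omega
    · have h1 := hmem k hk.1 hk.2
      rw [hin k hk.1 hk.2, hout l hl] at hkl
      have := hI.inj ⟨by omega, by omega⟩ ⟨by omega, by omega⟩ hkl
      omega
    · have h2 := hmem l hl.1 hl.2
      rw [hout k hk, hin l hl.1 hl.2] at hkl
      have := hI.inj ⟨by omega, by omega⟩ ⟨by omega, by omega⟩ hkl
      omega
    · rw [hout k hk, hout l hl] at hkl
      exact hI.inj ⟨hk1, hk2⟩ ⟨hl1, hl2⟩ hkl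
  · rintro c d hcd ⟨_, hcg, hdg, hr⟩
    dsimp only at hcg hdg hr ⊢
    have hdj : d ≤ j := by
      by_contra hlt
      have := hr (d - 1) (by omega) (by omega)
      rw [hsame _ (by omega)] at this
      exact not_green_of_red this (hjG _ (by omega))
    by_cases hda : d < a
    · rw [hπo c (by omega), hπo d hda]
      refine hI.blk c d hcd ⟨hcd.le, ?_, ?_, ?_⟩
      · rw [← hcg, hsame _ (by omega)]
      · rw [← hdg, hsame _ (by omega)]
      · intro m h1 h2
        rw [← hr m h1 h2, hsame _ (by omega)]
    · -- a block meeting `[a, j]` is `[a, j]` itself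
      have hac : a ≤ c := by
        by_contra hlt
        have := hr (a - 1) (by omega) (by omega)
        rw [hsame _ (by omega)] at this
        exact not_green_of_red this hag
      have hca : c = a := by
        by_contra hne
        exact not_green_of_red (hred (c - 1) (by omega) (by omega)) hcg
      have hdj' : d = j := by
        by_contra hne
        exact not_green_of_red (hred d (by omega) (by omega)) hdg
      rw [hca, hdj', hπa, hπj]
      exact hEsymm _ _ hiE

lemma exists_inv {μ : ℕ} {E : ℕ → ℕ → Prop} (hEsymm : ∀ x y, E x y → E y x)
    (hEclique : ∀ x y z, E x y → E y z → x ≠ z → E x z)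
    {π₀ : ℕ → ℕ} (hπ₀ : Set.InjOn π₀ (Set.Icc 1 μ)) (r : ℕ) :
    ∃ J, Inv μ E (TIter 1 μ E π₀ r) J := by
  induction r with
  | zero =>
    have hg : ∀ k, fpos 1 μ (fun _ => Col.green) k = Col.green := fun k => by simp [fpos]
    refine ⟨0, fun k _ => hg k, fun j hj hc => ?_, hπ₀, fun c d hcd hB => ?_⟩
    · have := hc.1
      omega
    · exact absurd (hg c) (not_green_of_red (hB.2.2.2 c le_rfl hcd))
  | succ r ih =>
    obtain ⟨J, hI⟩ := ih
    rw [TIter, Function.iterate_succ_apply']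
    by_cases h : hasJ 1 μ E (TIter 1 μ E π₀ r).1 (TIter 1 μ E π₀ r).2
    · exact ⟨_, hI.step hEsymm hEclique h⟩
    · refine ⟨J, ?_⟩
      have : Tstep 1 μ E (TIter 1 μ E π₀ r) = TIter 1 μ E π₀ r := if_neg h
      rw [TIter] at this
      rw [this]
      exact hI

end TOp

open TOp in
/-- (i) If `(π_r,f_r)` is not a fixed point of `T` then `j_r < j_{r+1}`
(as extended naturals, `j = +∞` when there is no candidate);
(ii) if `j_r` is finite then `b_r(j_r) = j_r`;
(iii) if `j_r` is finite then `f_{r+1}(k⁺) = green` for all `j_r ≤ k ≤ μ−1`. -/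
theorem stmt6 (μ : ℕ) (hμ : 2 ≤ μ) (E : ℕ → ℕ → Prop)
    (hEsymm : ∀ x y, E x y → E y x)
    (hEirr : ∀ x, ¬ E x x)
    (hEmem : ∀ x y, E x y → 1 ≤ x ∧ x ≤ μ ∧ 1 ≤ y ∧ y ≤ μ)
    (hEclique : ∀ x y z, E x y → E y z → x ≠ z → E x z)
    (π₀ : ℕ → ℕ) (hπ₀ : Set.BijOn π₀ (Set.Icc 1 μ) (Set.Icc 1 μ))
    (r : ℕ) :
    (hasJ 1 μ E (TIter 1 μ E π₀ r).1 (TIter 1 μ E π₀ r).2 →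
      jE 1 μ E (TIter 1 μ E π₀ r).1 (TIter 1 μ E π₀ r).2 <
        jE 1 μ E (TIter 1 μ E π₀ (r + 1)).1 (TIter 1 μ E π₀ (r + 1)).2) ∧
    (hasJ 1 μ E (TIter 1 μ E π₀ r).1 (TIter 1 μ E π₀ r).2 →
      bVal 1 μ (TIter 1 μ E π₀ r).2 (jVal 1 μ E (TIter 1 μ E π₀ r).1 (TIter 1 μ E π₀ r).2) =
        jVal 1 μ E (TIter 1 μ E π₀ r).1 (TIter 1 μ E π₀ r).2) ∧
    (hasJ 1 μ E (TIter 1 μ E π₀ r).1 (TIter 1 μ E π₀ r).2 →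
      ∀ k, jVal 1 μ E (TIter 1 μ E π₀ r).1 (TIter 1 μ E π₀ r).2 ≤ k → k ≤ μ - 1 →
        fpos 1 μ (TIter 1 μ E π₀ (r + 1)).2 k = Col.green) := by
  obtain ⟨J, hI⟩ := exists_inv hEsymm hEclique hπ₀.injOn r
  have hsucc : TIter 1 μ E π₀ (r + 1) = Tstep 1 μ E (TIter 1 μ E π₀ r) :=
    Function.iterate_succ_apply' _ _ _
  refine ⟨fun h => ?_, fun h => (hI.data h).2, fun h k hk _ => ?_⟩
  · have hI' := hI.step hEsymm hEclique h
    rw [← hsucc] at hI'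
    rw [jE, jE, if_pos h]
    split_ifs with h'
    · exact_mod_cast (hI'.data h').1
    · exact ENat.natCast_lt_top _
  · rw [hsucc]
    exact (hI.step hEsymm hEclique h).green k hk
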